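/- arXiv:2102.10677 — 2 statements merged into one kernel-verified Lean document; each statement's English description precedes it below -/
import Mathlib

section
/- Let Ẑ be a real N × J matrix with singular value decomposition Ẑ = F √(Dᵖ) Vᵀ, where F is N × r with orthonormal columns (Fᵀ F = I), V is J × r with orthonormal columns (Vᵀ V = I), and Dᵖ is an r × r diagonal matrix with strictly positive diagonal entries, r being the rank of Ẑ. Let B be a symmetric positive definite J × J matrix, and suppose Vᵀ B V = U D Uᵀ where U is an orthogonal r × r matrix and D is an r × r diagonal matrix with strictly positive entries. Define the pre-multiplier A = F √(Dᵖ) U √D (√(Dᵖ))⁻¹ Fᵀ. Then A Ẑ Ẑᵀ Aᵀ = Ẑ B Ẑᵀ. -/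
/-! Write `S = √Dᵖ` and `T = √D`. Since `Fᵀ F = 1` and `S⁻¹ S = 1`, the adjusted anomalies are
`A Ẑ = F S U T Vᵀ`. As `Vᵀ V = 1` and `T Tᵀ = D`, their Gram matrix is
`F S (U D Uᵀ) Sᵀ Fᵀ = F S (Vᵀ B V) Sᵀ Fᵀ = Ẑ B Ẑᵀ`. -/

open Matrix

/-- Ensemble adjustment Kalman inversion: let `Ẑ = F √(Dᵖ) Vᵀ` be an SVD of the `N × J` matrix
`Ẑ` (with `F`, `V` having orthonormal columns and `Dᵖ` diagonal with strictly positive entries,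
`r = rank Ẑ`), let `B` be symmetric positive definite with `Vᵀ B V = U D Uᵀ` (`U` orthogonal,
`D` diagonal with strictly positive entries), and let
`A = F √(Dᵖ) U √D (√(Dᵖ))⁻¹ Fᵀ`. Then `A Ẑ Ẑᵀ Aᵀ = Ẑ B Ẑᵀ`. -/
theorem ensemble_adjustment_covariance
    {N J r : ℕ}
    (F : Matrix (Fin N) (Fin r) ℝ) (hF : Fᵀ * F = 1)
    (V : Matrix (Fin J) (Fin r) ℝ) (hV : Vᵀ * V = 1)
    (Dp : Fin r → ℝ) (hDp : ∀ i, 0 < Dp i)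
    (Zhat : Matrix (Fin N) (Fin J) ℝ)
    (hZ : Zhat = F * Matrix.diagonal (fun i => Real.sqrt (Dp i)) * Vᵀ)
    (hr : Zhat.rank = r)
    (B : Matrix (Fin J) (Fin J) ℝ) (hB : B.PosDef)
    (U : Matrix (Fin r) (Fin r) ℝ) (hU : U * Uᵀ = 1 ∧ Uᵀ * U = 1)
    (D : Fin r → ℝ) (hD : ∀ i, 0 < D i)
    (hBVD : Vᵀ * B * V = U * Matrix.diagonal D * Uᵀ)
    (A : Matrix (Fin N) (Fin N) ℝ)
    (hA : A = F * Matrix.diagonal (fun i => Real.sqrt (Dp i)) * U *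
        Matrix.diagonal (fun i => Real.sqrt (D i)) *
        (Matrix.diagonal (fun i => Real.sqrt (Dp i)))⁻¹ * Fᵀ) :
    A * (Zhat * Zhatᵀ) * Aᵀ = Zhat * B * Zhatᵀ := by
  set S := Matrix.diagonal (fun i => Real.sqrt (Dp i)) with hS
  set T := Matrix.diagonal (fun i => Real.sqrt (D i)) with hT
  have hTT : T * Tᵀ = Matrix.diagonal D := by
    rw [hT, Matrix.diagonal_transpose, Matrix.diagonal_mul_diagonal]
    congr 1
    funext i
    exact Real.mul_self_sqrt (hD i).le
  -- Positivity of `Dp` makes `S⁻¹` a genuine inverse rather than a junk value.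
  have hSi : S⁻¹ * S = 1 := by
    apply Matrix.nonsing_inv_mul
    rw [hS, Matrix.det_diagonal, isUnit_iff_ne_zero]
    exact Finset.prod_ne_zero_iff.mpr fun i _ => (Real.sqrt_pos.mpr (hDp i)).ne'
  have hAZ : A * Zhat = F * S * U * T * Vᵀ := by
    calc A * Zhat = F * S * U * T * (S⁻¹ * ((Fᵀ * F) * S)) * Vᵀ := by
          rw [hA, hZ]; simp only [Matrix.mul_assoc]
      _ = F * S * U * T * Vᵀ := by rw [hF, Matrix.one_mul, hSi, Matrix.mul_one]
  calc A * (Zhat * Zhatᵀ) * Aᵀ = (A * Zhat) * (A * Zhat)ᵀ := by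
        simp only [Matrix.transpose_mul, Matrix.mul_assoc]
    _ = F * S * U * (T * ((Vᵀ * V) * Tᵀ)) * Uᵀ * Sᵀ * Fᵀ := by
        rw [hAZ]
        simp only [Matrix.transpose_mul, Matrix.transpose_transpose, Matrix.mul_assoc]
    _ = F * S * (U * Matrix.diagonal D * Uᵀ) * Sᵀ * Fᵀ := by
        rw [hV, Matrix.one_mul, hTT]; simp only [Matrix.mul_assoc]
    _ = Zhat * B * Zhatᵀ := by
        rw [← hBVD, hZ]
        simp only [Matrix.transpose_mul, Matrix.transpose_transpose, Matrix.mul_assoc]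
end

section
/- Let Σ be a symmetric positive definite n × n real matrix and let Ŷ be a real n × J matrix whose columns sum to zero, i.e., Ŷ 𝟙 = 0 where 𝟙 ∈ ℝᴶ is the all-ones vector. Suppose Ŷᵀ Σ⁻¹ Ŷ = P Γ Pᵀ with P an orthogonal J × J matrix and Γ a diagonal J × J matrix with nonnegative entries, and define the symmetric transform T = P (Γ + I)^{−1/2} Pᵀ, where (Γ + I)^{−1/2} is the diagonal matrix with entries (Γᵢᵢ + 1)^{−1/2}. Then T 𝟙 = 𝟙, and consequently for any real N × J matrix Ẑ with Ẑ 𝟙 = 0 one has (Ẑ T) 𝟙 = 0. -/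
/-!
Put `v = Pᵀ 𝟙`. Since `Ŷ 𝟙 = 0`, the vector `𝟙` lies in the kernel of `Ŷᵀ Σ⁻¹ Ŷ = P Γ Pᵀ`, so
`Γ v = 0`: each coordinate has `Γᵢᵢ = 0` or `vᵢ = 0`. Where `Γᵢᵢ = 0` the factor
`(Γᵢᵢ + 1)^{−1/2}` is `1`, so `(Γ + I)^{−1/2} v = v`, and hence `T 𝟙 = P v = 𝟙`.
-/

open Matrix

/-- Unbiasedness of the symmetric ensemble transform: let `Σ` be symmetric positive definite, let
`Ŷ` be an `n × J` matrix with `Ŷ 𝟙 = 0`, suppose `Ŷᵀ Σ⁻¹ Ŷ = P Γ Pᵀ` with `P` orthogonal and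
`Γ` diagonal with nonnegative entries, and set `T = P (Γ + I)^{−1/2} Pᵀ`. Then `T 𝟙 = 𝟙`, and
consequently any `N × J` matrix `Ẑ` with `Ẑ 𝟙 = 0` satisfies `(Ẑ T) 𝟙 = 0`. -/
theorem symmetric_transform_unbiased
    {n J : ℕ} (S : Matrix (Fin n) (Fin n) ℝ) (hS : S.PosDef)
    (Yhat : Matrix (Fin n) (Fin J) ℝ)
    (hY : Yhat *ᵥ (fun _ => (1 : ℝ)) = 0)
    (P : Matrix (Fin J) (Fin J) ℝ) (hP : P * Pᵀ = 1 ∧ Pᵀ * P = 1)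
    (γ : Fin J → ℝ) (hγ : ∀ i, 0 ≤ γ i)
    (hYPΓ : Yhatᵀ * S⁻¹ * Yhat = P * Matrix.diagonal γ * Pᵀ)
    (T : Matrix (Fin J) (Fin J) ℝ)
    (hT : T = P * Matrix.diagonal (fun i => (Real.sqrt (γ i + 1))⁻¹) * Pᵀ) :
    T *ᵥ (fun _ => (1 : ℝ)) = (fun _ => (1 : ℝ)) ∧
    ∀ (N : ℕ) (Zhat : Matrix (Fin N) (Fin J) ℝ),
      Zhat *ᵥ (fun _ => (1 : ℝ)) = 0 → (Zhat * T) *ᵥ (fun _ => (1 : ℝ)) = 0 := by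
  have hv : Matrix.diagonal γ *ᵥ (Pᵀ *ᵥ (fun _ => (1 : ℝ))) = 0 := by
    have h : (Pᵀ * (P * Matrix.diagonal γ * Pᵀ)) *ᵥ (fun _ => (1 : ℝ)) = 0 := by
      rw [← hYPΓ, ← Matrix.mulVec_mulVec, ← Matrix.mulVec_mulVec, hY]
      simp
    rwa [Matrix.mul_assoc, ← Matrix.mul_assoc, hP.2, Matrix.one_mul,
      ← Matrix.mulVec_mulVec] at h
  have hD : Matrix.diagonal (fun i => (Real.sqrt (γ i + 1))⁻¹) *ᵥ (Pᵀ *ᵥ (fun _ => (1 : ℝ)))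
      = Pᵀ *ᵥ (fun _ => (1 : ℝ)) := by
    funext i
    have hi := congrFun hv i
    rw [Matrix.mulVec_diagonal, Pi.zero_apply] at hi
    rw [Matrix.mulVec_diagonal]
    rcases mul_eq_zero.mp hi with h | h <;> simp [h]
  have hT1 : T *ᵥ (fun _ => (1 : ℝ)) = (fun _ => (1 : ℝ)) := by
    rw [hT, ← Matrix.mulVec_mulVec, ← Matrix.mulVec_mulVec, hD, Matrix.mulVec_mulVec, hP.1,
      Matrix.one_mulVec]
  refine ⟨hT1, fun N Zhat hZ => ?_⟩
  rw [← Matrix.mulVec_mulVec, hT1, hZ]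
end
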